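/- arXiv:2602.14325 — 2 statements merged into one kernel-verified Lean document; each statement's English description precedes it below -/
import Mathlib

section
/- Every Lengyel transfer game L(b;x₁,y₁;x₂,y₂) is eventually horizontally periodic: there exist a positive integer p and a natural number x₀ such that SG(x+p, y) = SG(x,y) for all x ≥ x₀ and all y ∈ ℕ. -/
/-- The minimum excludant of a set of naturals: the least natural number not in the set. -/
noncomputable def mex (S : Set ℕ) : ℕ := sInf {n : ℕ | n ∉ S}

/-- `SG` is the Sprague–Grundy function of the Lengyel transfer game `L(b; x₁,y₁; x₂,y₂)`:
from `(x,y)` one may move to `(x, y−b)` (when `y ≥ b`), to `(x−x₁, y+y₁)` (when `x ≥ x₁`),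
or to `(x−x₂, y+y₂)` (when `x ≥ x₂`), and `SG` satisfies the mex recurrence. -/
def IsLengyelSG (b x1 y1 x2 y2 : ℕ) (SG : ℕ → ℕ → ℕ) : Prop :=
  ∀ x y : ℕ, SG x y = mex
    ((if b ≤ y then ({SG x (y - b)} : Set ℕ) else ∅) ∪
     (if x1 ≤ x then ({SG (x - x1) (y + y1)} : Set ℕ) else ∅) ∪
     (if x2 ≤ x then ({SG (x - x2) (y + y2)} : Set ℕ) else ∅))

theorem mex_notMem_of_finite {S : Set ℕ} (hS : S.Finite) : mex S ∉ S := by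
  have h : {n : ℕ | n ∉ S}.Nonempty := hS.exists_notMem
  exact Nat.sInf_mem h

theorem mex_le_of_notMem {S : Set ℕ} {n : ℕ} (h : n ∉ S) : mex S ≤ n := Nat.sInf_le h

/-- Adding a value different from the mex does not change the mex. -/
theorem mex_singleton_union {S : Set ℕ} (hS : S.Finite) {v : ℕ} (hv : v ≠ mex S) :
    mex ({v} ∪ S) = mex S := by
  apply le_antisymm
  · apply mex_le_of_notMem
    rintro (h | h)
    · exact hv h.symm
    · exact mex_notMem_of_finite hS h
  · apply mex_le_of_notMem
    intro h
    exact mex_notMem_of_finite ((Set.finite_singleton v).union hS) (Or.inr h)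

/-- The values of the two horizontal options. -/
def horizOpts (x1 y1 x2 y2 : ℕ) (SG : ℕ → ℕ → ℕ) (x y : ℕ) : Set ℕ :=
  (if x1 ≤ x then ({SG (x - x1) (y + y1)} : Set ℕ) else ∅) ∪
  (if x2 ≤ x then ({SG (x - x2) (y + y2)} : Set ℕ) else ∅)

theorem horizOpts_finite (x1 y1 x2 y2 : ℕ) (SG : ℕ → ℕ → ℕ) (x y : ℕ) :
    (horizOpts x1 y1 x2 y2 SG x y).Finite := by
  unfold horizOpts
  split_ifs <;> simp

theorem SG_low {b x1 y1 x2 y2 : ℕ} {SG : ℕ → ℕ → ℕ} (hSG : IsLengyelSG b x1 y1 x2 y2 SG)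
    (x : ℕ) {y : ℕ} (hy : y < b) : SG x y = mex (horizOpts x1 y1 x2 y2 SG x y) := by
  rw [hSG x y, if_neg (by omega), Set.union_assoc, Set.empty_union]
  rfl

theorem SG_high {b x1 y1 x2 y2 : ℕ} {SG : ℕ → ℕ → ℕ} (hSG : IsLengyelSG b x1 y1 x2 y2 SG)
    (x y : ℕ) : SG x (y + b) = mex ({SG x y} ∪ horizOpts x1 y1 x2 y2 SG x (y + b)) := by
  rw [hSG x (y + b), if_pos (by omega), Set.union_assoc, Nat.add_sub_cancel]
  rfl

/-- Every column is purely periodic with period `2b`. -/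
theorem SG_vertical {b x1 y1 x2 y2 : ℕ} (hx1 : 0 < x1) (hx2 : 0 < x2)
    {SG : ℕ → ℕ → ℕ} (hSG : IsLengyelSG b x1 y1 x2 y2 SG) :
    ∀ x y : ℕ, SG x (y + b + b) = SG x y := by
  intro x
  induction x using Nat.strong_induction_on with
  | _ x ihx =>
  have hO : ∀ y, horizOpts x1 y1 x2 y2 SG x (y + b + b) = horizOpts x1 y1 x2 y2 SG x y := by
    intro y
    have e1 : y + b + b + y1 = y + y1 + b + b := by ring
    have e2 : y + b + b + y2 = y + y2 + b + b := by ring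
    unfold horizOpts
    rw [e1, e2]
    split_ifs with h1 h2 h2
    · rw [ihx (x - x1) (by omega), ihx (x - x2) (by omega)]
    · rw [ihx (x - x1) (by omega)]
    · rw [ihx (x - x2) (by omega)]
    · rfl
  intro y
  induction y using Nat.strong_induction_on with
  | _ y ihy =>
  by_cases hy : y < b
  · rw [SG_high hSG x (y + b), hO, SG_low hSG x hy]
    apply mex_singleton_union (horizOpts_finite ..)
    rw [← SG_low hSG x hy, SG_high hSG x y]
    intro h
    apply mex_notMem_of_finite
      ((Set.finite_singleton (SG x y)).union (horizOpts_finite x1 y1 x2 y2 SG x (y + b)))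
    exact Or.inl h
  · obtain ⟨z, rfl⟩ : ∃ z, y = z + b := ⟨y - b, by omega⟩
    rcases Nat.eq_zero_or_pos b with rfl | hb
    · rfl
    · rw [SG_high hSG x (z + b + b), hO, ihy z (by omega), SG_high hSG x z]

theorem SG_lt_four {b x1 y1 x2 y2 : ℕ} {SG : ℕ → ℕ → ℕ}
    (hSG : IsLengyelSG b x1 y1 x2 y2 SG) (x y : ℕ) : SG x y < 4 := by
  by_contra hlt
  push Not at hlt
  have key : ∀ n, n < 4 → n = SG x (y - b) ∨ n = SG (x - x1) (y + y1) ∨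
      n = SG (x - x2) (y + y2) := by
    intro n hn
    by_contra hc
    push Not at hc
    have : SG x y ≤ n := by
      rw [hSG x y]
      apply mex_le_of_notMem
      split_ifs <;> simp <;> tauto
    omega
  have h0 := key 0 (by omega)
  have h1 := key 1 (by omega)
  have h2 := key 2 (by omega)
  have h3 := key 3 (by omega)
  omega

/-- Every Lengyel transfer game is eventually horizontally periodic. -/
theorem eventually_horizontally_periodic (b x1 x2 y1 y2 : ℕ)
    (hb : 0 < b) (hx1 : 0 < x1) (hx2 : 0 < x2)
    (SG : ℕ → ℕ → ℕ) (hSG : IsLengyelSG b x1 y1 x2 y2 SG) :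
    ∃ p : ℕ, 0 < p ∧ ∃ x0 : ℕ, ∀ x : ℕ, x0 ≤ x → ∀ y : ℕ, SG (x + p) y = SG x y := by
  have hper : ∀ x, Function.Periodic (SG x) (b + b) := fun x y => by
    rw [← add_assoc]; exact SG_vertical hx1 hx2 hSG x y
  let st : ℕ → (Fin (x1 + x2) → Fin (b + b) → Fin 4) :=
    fun x k y => ⟨SG (x + k) y, SG_lt_four hSG _ _⟩
  obtain ⟨i, j, hij, hst⟩ : ∃ i j, i < j ∧ st i = st j := by
    obtain ⟨i, j, hne, h⟩ := Finite.exists_ne_map_eq_of_infinite st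
    rcases Nat.lt_or_gt_of_ne hne with h' | h'
    · exact ⟨i, j, h', h⟩
    · exact ⟨j, i, h', h.symm⟩
  have main : ∀ k y, SG (j + k) y = SG (i + k) y := by
    intro k
    induction k using Nat.strong_induction_on with
    | _ k ihk =>
    by_cases hk : k < x1 + x2
    · intro y
      rw [← (hper (j + k)).map_mod_nat y, ← (hper (i + k)).map_mod_nat y]
      have h := congrFun (congrFun hst ⟨k, hk⟩) ⟨y % (b + b), Nat.mod_lt _ (by omega)⟩
      exact (congrArg Fin.val h).symm
    · intro y
      induction y using Nat.strong_induction_on with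
      | _ y ihy =>
      have a1 : j + k - x1 = j + (k - x1) := by omega
      have a2 : j + k - x2 = j + (k - x2) := by omega
      have a3 : i + k - x1 = i + (k - x1) := by omega
      have a4 : i + k - x2 = i + (k - x2) := by omega
      rw [hSG (j + k) y, hSG (i + k) y, if_pos (show x1 ≤ j + k by omega),
        if_pos (show x2 ≤ j + k by omega), if_pos (show x1 ≤ i + k by omega),
        if_pos (show x2 ≤ i + k by omega), a1, a2, a3, a4,
        ihk (k - x1) (by omega), ihk (k - x2) (by omega)]
      split_ifs with hy
      · rw [ihy (y - b) (by omega)]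
      · rfl
  refine ⟨j - i, by omega, i, fun x hx y => ?_⟩
  have h := main (x - i) y
  rwa [show j + (x - i) = x + (j - i) by omega, show i + (x - i) = x by omega] at h
end

section
/- In the Lengyel transfer game L(b;x₁,0;1,1), the column with index x₁ is a 2-column — that is, there exists y ∈ ℕ with SG(x₁, y) = 2 — if and only if it is NOT the case that b is even and x₁ = k·b for some odd integer k. -/
theorem mex_eq_of {S : Set ℕ} {n : ℕ} (h1 : n ∉ S) (h2 : ∀ m < n, m ∈ S) : mex S = n := by
  unfold mex
  apply le_antisymm
  · exact Nat.sInf_le h1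
  · by_contra hlt
    push Not at hlt
    exact Nat.sInf_mem (s := {n : ℕ | n ∉ S}) ⟨n, h1⟩ (h2 _ hlt)

/-- Values in the columns before `x1`. -/
theorem low_columns (b x1 : ℕ) (hb : 0 < b)
    (SG : ℕ → ℕ → ℕ) (hSG : IsLengyelSG b x1 0 1 1 SG) :
    ∀ x, x < x1 → ∀ y, SG x y = (x + (x + y) / b) % 2 := by
  intro x
  induction x with
  | zero =>
    intro hx y
    induction y using Nat.strong_induction_on with
    | _ y ih =>
      rw [hSG 0 y]
      by_cases hy : b ≤ y
      · have h := ih (y - b) (by omega)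
        have hd : y / b = (y - b) / b + 1 := Nat.div_eq_sub_div hb hy
        simp only [Nat.zero_add] at h ⊢
        rw [h]
        apply mex_eq_of
        · simp [hy]; omega
        · intro m hm
          simp [hy]; omega
      · have hd : y / b = 0 := Nat.div_eq_of_lt (by omega)
        apply mex_eq_of
        · simp [hy]; omega
        · intro m hm
          simp only [Nat.zero_add, hd] at hm; omega
  | succ x ihx =>
    intro hx y
    have hp := ihx (by omega) (y + 1)
    rw [show x + (y + 1) = x + 1 + y by ring] at hp
    induction y using Nat.strong_induction_on with
    | _ y ih =>
      rw [hSG (x + 1) y]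
      have hnx : ¬ x1 ≤ x + 1 := by omega
      by_cases hy : b ≤ y
      · have hp2 := ihx (by omega) (y - b + 1)
        rw [show x + (y - b + 1) = x + 1 + (y - b) by ring] at hp2
        have h := ih (y - b) (by omega) hp2
        have hd : (x + 1 + y) / b = (x + 1 + (y - b)) / b + 1 := by
          rw [Nat.div_eq_sub_div hb (by omega)]
          congr 2; omega
        apply mex_eq_of
        · simp [hy, hnx, hp, h]; omega
        · intro m hm
          simp [hy, hnx, hp, h]; omega
      · apply mex_eq_of
        · simp [hy, hnx, hp]; omega
        · intro m hm
          simp [hy, hnx, hp]; omega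

theorem two_column_criterion (b x1 : ℕ) (hb : 0 < b) (hx1 : 0 < x1)
    (SG : ℕ → ℕ → ℕ) (hSG : IsLengyelSG b x1 0 1 1 SG) :
    (∃ y : ℕ, SG x1 y = 2) ↔ ¬ (Even b ∧ ∃ k : ℕ, Odd k ∧ x1 = k * b) := by
  have hlow := low_columns b x1 hb SG hSG
  have hA : ∀ y, SG 0 y = (y / b) % 2 := by
    intro y; simpa using hlow 0 hx1 y
  have hB : ∀ y, SG (x1 - 1) (y + 1) = (x1 - 1 + (x1 + y) / b) % 2 := by
    intro y
    rw [hlow (x1 - 1) (by omega) (y + 1), show x1 - 1 + (y + 1) = x1 + y by omega]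
  have h1 : 1 ≤ x1 := hx1
  constructor
  · rintro ⟨y, hy⟩ ⟨hbe, k, hk, hxk⟩
    have hpar : x1 % 2 = 0 := by
      rw [hxk]; exact Nat.even_iff.mp (hbe.mul_left k)
    have hk2 := Nat.odd_iff.mp hk
    have key : ∀ y, SG x1 y = (y / b + 1) % 2 := by
      intro y
      induction y using Nat.strong_induction_on with
      | _ y ih =>
        have ha := hA y
        have hc := hB y
        have hd : (x1 + y) / b = k + y / b := by
          rw [hxk, mul_comm, Nat.mul_add_div hb]
        rw [hd] at hc
        rw [hSG x1 y]
        by_cases hyb : b ≤ y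
        · have h := ih (y - b) (by omega)
          have hd : y / b = (y - b) / b + 1 := Nat.div_eq_sub_div hb hyb
          apply mex_eq_of
          · simp [hyb, h1, h, ha, hc]; omega
          · intro m hm
            simp [hyb, h1, h, ha, hc]; omega
        · apply mex_eq_of
          · simp [hyb, h1, ha, hc]; omega
          · intro m hm
            simp [hyb, h1, ha, hc]; omega
    rw [key] at hy; omega
  · intro hn
    have two : ∀ y, y < b → (x1 + (x1 + y) / b) % 2 = 0 → SG x1 y = 2 := by
      intro y hyb he
      have ha := hA y
      have hc := hB y
      rw [Nat.div_eq_of_lt hyb] at ha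
      rw [show (x1 - 1 + (x1 + y) / b) % 2 = 1 by omega] at hc
      have hny : ¬ b ≤ y := by omega
      rw [hSG x1 y]
      apply mex_eq_of
      · simp [hny, h1, ha, hc]
      · intro m hm
        simp [hny, h1, ha, hc]; omega
    by_contra hno
    push Not at hno
    apply hn
    have odd0 : ∀ y, y < b → (x1 + (x1 + y) / b) % 2 = 1 := by
      intro y hy
      by_contra h
      exact hno y (two y hy (by omega))
    have o0 := odd0 0 hb
    have hdm := Nat.div_add_mod x1 b
    have hml := Nat.mod_lt x1 hb
    simp only [Nat.add_zero] at o0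
    have hr : x1 % b = 0 := by
      by_contra hr
      have o1 := odd0 (b - x1 % b) (by omega)
      have : (x1 + (b - x1 % b)) / b = x1 / b + 1 := by
        rw [show x1 + (b - x1 % b) = b * (x1 / b + 1) by rw [mul_add]; omega]
        exact Nat.mul_div_cancel_left _ hb
      omega
    have hxk : x1 = x1 / b * b := by rw [mul_comm]; omega
    generalize x1 / b = k at *
    have hodd : Odd (k * b + k) := by rw [← hxk]; exact Nat.odd_iff.mpr o0
    rw [show k * b + k = k * (b + 1) by ring, Nat.odd_mul] at hodd
    refine ⟨?_, k, hodd.1, hxk⟩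
    have := Nat.odd_iff.mp hodd.2
    exact Nat.even_iff.mpr (by omega)
end
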